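/- If the objective V : Δ(Ω) → ℝ is Lipschitz continuous with respect to the Kantorovich–Rubinstein distance d, then the concave closure V̂ has bounded steepness at μ₀: there exists a constant L such that V̂(μ) − V̂(μ₀) ≤ L·d(μ, μ₀) for all μ ∈ Δ(Ω). -/

import Mathlib

open MeasureTheory

/-- Convex combination `t μ + (1 - t) η` of two probability measures. -/
noncomputable def mix {Ω : Type*} [MeasurableSpace Ω] (t : NNReal) (ht : t ≤ 1)
    (μ η : ProbabilityMeasure Ω) : ProbabilityMeasure Ω :=
  ⟨t • (μ : Measure Ω) + (1 - t) • (η : Measure Ω), by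
    constructor
    simp only [Measure.coe_add, Pi.add_apply, Measure.smul_apply, smul_eq_mul,
      measure_univ, mul_one, ENNReal.smul_def]
    rw [← ENNReal.coe_add, add_tsub_cancel_of_le ht, ENNReal.coe_one]⟩

/-- A function `H : Δ(Ω) → ℝ` is affine if it respects convex combinations. -/
def IsAffine {Ω : Type*} [MeasurableSpace Ω] (H : ProbabilityMeasure Ω → ℝ) : Prop :=
  ∀ (μ η : ProbabilityMeasure Ω) (t : NNReal) (ht : t ≤ 1),
    H (mix t ht μ η) = (t : ℝ) * H μ + (1 - (t : ℝ)) * H η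

/-- The concave closure `V̂(μ) = inf {H(μ) : H affine continuous, H ≥ V}`. -/
noncomputable def concaveClosure {Ω : Type*} [MeasurableSpace Ω] [TopologicalSpace Ω]
    [OpensMeasurableSpace Ω] (V : ProbabilityMeasure Ω → ℝ) (μ : ProbabilityMeasure Ω) : ℝ :=
  sInf {r : ℝ | ∃ H : ProbabilityMeasure Ω → ℝ,
    Continuous H ∧ IsAffine H ∧ (∀ μ', V μ' ≤ H μ') ∧ r = H μ}

/-- The Kantorovich–Rubinstein distance between two (finite) measures:
`d(μ, η) = sup {∫ f dμ − ∫ f dη : f 1-Lipschitz, sup |f| ≤ 1}`. -/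
noncomputable def krDist {Ω : Type*} [MeasurableSpace Ω] [PseudoMetricSpace Ω]
    (μ η : Measure Ω) : ℝ :=
  sSup {r : ℝ | ∃ f : Ω → ℝ, LipschitzWith 1 f ∧ (∀ ω, |f ω| ≤ 1) ∧
    r = ∫ ω, f ω ∂μ - ∫ ω, f ω ∂η}

section Helpers

variable {Ω : Type*} [MetricSpace Ω] [CompactSpace Ω] [MeasurableSpace Ω] [BorelSpace Ω]

lemma cont_integrable {h : Ω → ℝ} (hh : Continuous h) (ν : Measure Ω) [IsFiniteMeasure ν] :
    Integrable h ν :=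
  BoundedContinuousFunction.integrable ν (BoundedContinuousFunction.mkOfCompact ⟨h, hh⟩)

lemma integral_mix {h : Ω → ℝ} (hh : Continuous h) (t : NNReal) (ht : t ≤ 1)
    (μ η : ProbabilityMeasure Ω) :
    ∫ ω, h ω ∂(mix t ht μ η : Measure Ω)
      = (t : ℝ) * ∫ ω, h ω ∂(μ : Measure Ω) + (1 - (t : ℝ)) * ∫ ω, h ω ∂(η : Measure Ω) := by
  have h1 := cont_integrable hh (μ : Measure Ω)
  have h2 := cont_integrable hh (η : Measure Ω)
  have : (mix t ht μ η : Measure Ω) = t • (μ : Measure Ω) + (1 - t) • (η : Measure Ω) := rfl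
  rw [this, integral_add_measure h1.smul_measure_nnreal h2.smul_measure_nnreal,
    integral_smul_nnreal_measure, integral_smul_nnreal_measure, NNReal.smul_def, NNReal.smul_def,
    NNReal.coe_sub ht, smul_eq_mul, smul_eq_mul, NNReal.coe_one]

lemma continuous_integral {h : Ω → ℝ} (hh : Continuous h) :
    Continuous (fun ν : ProbabilityMeasure Ω => ∫ ω, h ω ∂(ν : Measure Ω)) := by
  rw [continuous_iff_continuousAt]
  intro ν
  exact (ProbabilityMeasure.tendsto_iff_forall_integral_tendsto.1 Filter.tendsto_id)
    (BoundedContinuousFunction.mkOfCompact ⟨h, hh⟩)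

lemma repr_finite {H : ProbabilityMeasure Ω → ℝ} (hc : Continuous H) (ha : IsAffine H)
    (s : Finset Ω) : ∀ ν : ProbabilityMeasure Ω, (ν : Measure Ω) (s : Set Ω)ᶜ = 0 →
      H ν = ∫ ω, H (diracProba ω) ∂(ν : Measure Ω) := by
  classical
  have hh : Continuous (fun ω : Ω => H (diracProba ω)) := hc.comp continuous_diracProba
  induction s using Finset.induction_on with
  | empty => intro ν hν; simp at hν
  | insert a s has ih =>
    intro ν hν
    by_cases hz : (ν : Measure Ω) {a}ᶜ = 0
    · have hd : ν = diracProba a := by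
        apply Subtype.ext
        change (ν : Measure Ω) = Measure.dirac a
        have h1 : (ν : Measure Ω) {a} = 1 := (prob_compl_eq_zero_iff (by measurability)).1 hz
        have h2 := Measure.restrict_add_restrict_compl (μ := (ν : Measure Ω))
          (measurableSet_singleton a)
        rw [Measure.restrict_singleton, h1, Measure.restrict_eq_zero.2 hz] at h2
        simpa using h2.symm
      rw [hd]
      simp [diracProba]
    · have hp := ProbabilityTheory.cond_isProbabilityMeasure hz
      let η : ProbabilityMeasure Ω := ⟨ProbabilityTheory.cond (ν : Measure Ω) {a}ᶜ, hp⟩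
      have hηs : (η : Measure Ω) (s : Set Ω)ᶜ = 0 := by
        change ProbabilityTheory.cond (ν : Measure Ω) {a}ᶜ (s : Set Ω)ᶜ = 0
        rw [ProbabilityTheory.cond_apply (by measurability)]
        have : ({a}ᶜ ∩ (s : Set Ω)ᶜ) = ((insert a s : Finset Ω) : Set Ω)ᶜ := by
          ext x; simp
        rw [this, hν, mul_zero]
      let t : NNReal := ν {a}
      have ht : t ≤ 1 := ProbabilityMeasure.apply_le_one ν {a}
      have hcompl : (ν : Measure Ω) {a}ᶜ = ((1 - t : NNReal) : ENNReal) := by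
        rw [prob_compl_eq_one_sub (measurableSet_singleton a)]
        simp [t]
      have hmix : ν = mix t ht (diracProba a) η := by
        apply Subtype.ext
        change (ν : Measure Ω) = t • Measure.dirac a +
          (1 - t) • (((ν : Measure Ω) {a}ᶜ)⁻¹ • (ν : Measure Ω).restrict {a}ᶜ)
        have e1 : (1 - t) • (((ν : Measure Ω) {a}ᶜ)⁻¹ • (ν : Measure Ω).restrict {a}ᶜ)
            = (ν : Measure Ω).restrict {a}ᶜ := by
          rw [← Measure.coe_nnreal_smul (1 - t), ← hcompl, smul_smul, ENNReal.mul_inv_cancel hz (measure_ne_top _ _), one_smul]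
        rw [e1]
        have e2 : t • Measure.dirac a = (ν : Measure Ω).restrict {a} := by
          rw [Measure.restrict_singleton]
          rw [← Measure.coe_nnreal_smul t]
          congr 1
          simp [t]
        rw [e2, Measure.restrict_add_restrict_compl (measurableSet_singleton a)]
      have e := integral_mix hh t ht (diracProba a) η
      rw [← hmix] at e
      rw [e, ← ih η hηs]
      conv_lhs => rw [hmix, ha]
      simp [diracProba]

lemma map_integral {h : Ω → ℝ} (hh : Continuous h) (ν : ProbabilityMeasure Ω) {T : Ω → Ω}
    (hT : Measurable T) :
    ∫ ω, h ω ∂(ν.map hT.aemeasurable : Measure Ω) = ∫ ω, h (T ω) ∂(ν : Measure Ω) := by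
  rw [ProbabilityMeasure.toMeasure_map]
  exact integral_map hT.aemeasurable hh.aestronglyMeasurable

lemma bdd_of_cont {h : Ω → ℝ} (hh : Continuous h) : ∃ M, ∀ ω, ‖h ω‖ ≤ M :=
  ⟨_, (BoundedContinuousFunction.mkOfCompact ⟨h, hh⟩).norm_coe_le_norm⟩

lemma repr_all {H : ProbabilityMeasure Ω → ℝ} (hc : Continuous H) (ha : IsAffine H)
    (ν : ProbabilityMeasure Ω) : H ν = ∫ ω, H (diracProba ω) ∂(ν : Measure Ω) := by
  have hne : Nonempty Ω := ν.nonempty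
  have hh : Continuous (fun ω : Ω => H (diracProba ω)) := hc.comp continuous_diracProba
  let T : ℕ → SimpleFunc Ω Ω := fun n => SimpleFunc.nearestPt (TopologicalSpace.denseSeq Ω) n
  have hT : ∀ n, Measurable (T n) := fun n => (T n).measurable
  have hTt : ∀ x, Filter.Tendsto (fun n => T n x) Filter.atTop (nhds x) := fun x =>
    SimpleFunc.tendsto_nearestPt (TopologicalSpace.denseRange_denseSeq Ω x)
  have key : ∀ h : Ω → ℝ, Continuous h → Filter.Tendsto
      (fun n => ∫ ω, h ω ∂(ν.map (hT n).aemeasurable : Measure Ω)) Filter.atTop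
      (nhds (∫ ω, h ω ∂(ν : Measure Ω))) := by
    intro h hh
    obtain ⟨M, hM⟩ := bdd_of_cont hh
    simp_rw [map_integral hh ν (hT _)]
    refine tendsto_integral_of_dominated_convergence (fun _ => M)
      (fun n => (hh.measurable.comp (hT n)).aestronglyMeasurable) (integrable_const M)
      (fun n => Filter.Eventually.of_forall fun x => hM _)
      (Filter.Eventually.of_forall fun x => (hh.tendsto x).comp (hTt x))
  have hw : Filter.Tendsto (fun n => ν.map (hT n).aemeasurable) Filter.atTop (nhds ν) :=
    ProbabilityMeasure.tendsto_iff_forall_integral_tendsto.2 fun f => key f f.continuous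
  refine tendsto_nhds_unique ((hc.tendsto ν).comp hw) ?_
  refine (key _ hh).congr fun n => ?_
  refine (repr_finite hc ha (T n).range _ ?_).symm
  rw [ProbabilityMeasure.toMeasure_map, Measure.map_apply (hT n)
    (Finset.finite_toSet _).measurableSet.compl]
  have : (T n) ⁻¹' ((T n).range : Set Ω)ᶜ = ∅ := by
    ext x; simp
  rw [this, measure_empty]

lemma krDist_bdd (μ η : ProbabilityMeasure Ω) :
    BddAbove {r : ℝ | ∃ f : Ω → ℝ, LipschitzWith 1 f ∧ (∀ ω, |f ω| ≤ 1) ∧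
      r = ∫ ω, f ω ∂(μ : Measure Ω) - ∫ ω, f ω ∂(η : Measure Ω)} := by
  refine ⟨2, ?_⟩
  rintro r ⟨f, hf, hb, rfl⟩
  have h1 : ‖∫ ω, f ω ∂(μ : Measure Ω)‖ ≤ 1 := by
    simpa using norm_integral_le_of_norm_le_const (μ := (μ : Measure Ω)) (f := f) (C := 1)
      (Filter.Eventually.of_forall hb)
  have h2 : ‖∫ ω, f ω ∂(η : Measure Ω)‖ ≤ 1 := by
    simpa using norm_integral_le_of_norm_le_const (μ := (η : Measure Ω)) (f := f) (C := 1)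
      (Filter.Eventually.of_forall hb)
  rw [Real.norm_eq_abs, abs_le] at h1 h2
  linarith

lemma le_krDist (μ η : ProbabilityMeasure Ω) {f : Ω → ℝ} (hf : LipschitzWith 1 f)
    (hb : ∀ ω, |f ω| ≤ 1) :
    ∫ ω, f ω ∂(μ : Measure Ω) - ∫ ω, f ω ∂(η : Measure Ω)
      ≤ krDist (μ : Measure Ω) (η : Measure Ω) :=
  le_csSup (krDist_bdd μ η) ⟨f, hf, hb, rfl⟩

lemma krDist_nonneg' (μ η : ProbabilityMeasure Ω) :
    0 ≤ krDist (μ : Measure Ω) (η : Measure Ω) := by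
  have := le_krDist μ η (f := fun _ => 0) (LipschitzWith.const' 0) (by simp)
  simpa using this

lemma krDist_map_le (ν : ProbabilityMeasure Ω) {T : Ω → Ω} (hT : Measurable T) :
    krDist (ν : Measure Ω) (ν.map hT.aemeasurable : Measure Ω)
      ≤ ∫ ω, dist ω (T ω) ∂(ν : Measure Ω) := by
  refine csSup_le ⟨_, fun _ => 0, LipschitzWith.const' 0, by simp, rfl⟩ ?_
  rintro r ⟨f, hf, hb, rfl⟩
  have hi : Integrable (fun ω => f (T ω)) (ν : Measure Ω) :=
    Integrable.of_bound (hf.continuous.measurable.comp hT).aestronglyMeasurable 1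
      (Filter.Eventually.of_forall fun x => hb _)
  have hd : Integrable (fun ω => dist ω (T ω)) (ν : Measure Ω) :=
    Integrable.of_bound (measurable_id.dist hT).aestronglyMeasurable (Metric.diam (Set.univ : Set Ω))
      (Filter.Eventually.of_forall fun x => by
        rw [Real.norm_of_nonneg dist_nonneg]
        exact Metric.dist_le_diam_of_mem isCompact_univ.isBounded trivial trivial)
  rw [map_integral hf.continuous ν hT, ← integral_sub (cont_integrable hf.continuous _) hi]
  refine integral_mono ((cont_integrable hf.continuous _).sub hi) hd fun ω => ?_
  have := hf.dist_le_mul ω (T ω)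
  rw [Real.dist_eq] at this
  simpa using (le_abs_self _).trans this

/-- Lipschitz functions are controlled by the KR distance. -/
lemma lip_le_krDist (μ η : ProbabilityMeasure Ω) {C : ℝ} (hC : 0 ≤ C) {g : Ω → ℝ}
    (hg : ∀ x y, |g x - g y| ≤ C * dist x y) :
    ∫ ω, g ω ∂(μ : Measure Ω) - ∫ ω, g ω ∂(η : Measure Ω)
      ≤ ((C + 1) * (Metric.diam (Set.univ : Set Ω) + 1)) *
        krDist (μ : Measure Ω) (η : Measure Ω) := by
  obtain ⟨x₀⟩ : Nonempty Ω := μ.nonempty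
  set D := Metric.diam (Set.univ : Set Ω) with hD
  have hD0 : 0 ≤ D := Metric.diam_nonneg
  have hdD : ∀ x y : Ω, dist x y ≤ D := fun x y =>
    Metric.dist_le_diam_of_mem isCompact_univ.isBounded trivial trivial
  set A := (C + 1) * (D + 1) with hA
  have hA0 : 0 < A := by positivity
  have hCA : C ≤ A := by nlinarith
  have hgc : Continuous g := by
    have : LipschitzWith ⟨C, hC⟩ g := LipschitzWith.of_dist_le_mul fun x y => by
      rw [Real.dist_eq]; exact hg x y
    exact this.continuous
  have h1 : LipschitzWith 1 (fun x => A⁻¹ * (g x - g x₀)) := by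
    refine LipschitzWith.of_dist_le_mul fun x y => ?_
    rw [Real.dist_eq, ← mul_sub, abs_mul, abs_of_pos (inv_pos.2 hA0), inv_mul_le_iff₀ hA0]
    simp only [sub_sub_sub_cancel_right, NNReal.coe_one, one_mul]
    exact (hg x y).trans (by gcongr)
  have h2 : ∀ x, |A⁻¹ * (g x - g x₀)| ≤ 1 := by
    intro x
    rw [abs_mul, abs_of_pos (inv_pos.2 hA0), inv_mul_le_iff₀ hA0]
    have := mul_le_mul_of_nonneg_left (hdD x x₀) hC
    have := hg x x₀
    nlinarith
  have := le_krDist μ η h1 h2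
  rw [integral_const_mul, integral_const_mul, integral_sub (cont_integrable hgc _)
    (integrable_const _), integral_sub (cont_integrable hgc _) (integrable_const _)] at this
  simp only [integral_const, probReal_univ, one_smul] at this
  rw [← mul_sub, inv_mul_le_iff₀ hA0] at this
  linarith

/-- Key step: regularise an affine majorant by an inf-convolution. -/
lemma exists_lip {V : ProbabilityMeasure Ω → ℝ} {C : ℝ} (hC : 0 ≤ C)
    (hlip : ∀ μ η : ProbabilityMeasure Ω,
      V μ - V η ≤ C * krDist (μ : Measure Ω) (η : Measure Ω)) [Nonempty Ω]
    {h : Ω → ℝ} (hh : Continuous h)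
    (hVh : ∀ ν : ProbabilityMeasure Ω, V ν ≤ ∫ ω, h ω ∂(ν : Measure Ω)) :
    ∃ g : Ω → ℝ, (∀ x y, |g x - g y| ≤ C * dist x y) ∧ (∀ x, g x ≤ h x) ∧
      ∀ ν : ProbabilityMeasure Ω, V ν ≤ ∫ ω, g ω ∂(ν : Measure Ω) := by
  classical
  obtain ⟨M, hM⟩ := bdd_of_cont hh
  let F : Ω → Ω → ℝ := fun x y => h y + C * dist x y
  have hbdd : ∀ x, BddBelow (Set.range (F x)) := by
    refine fun x => ⟨-M, ?_⟩
    rintro _ ⟨y, rfl⟩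
    have := (abs_le.1 (hM y)).1
    have : 0 ≤ C * dist x y := by positivity
    simp only [F]; linarith
  let g : Ω → ℝ := fun x => ⨅ y, F x y
  have hle : ∀ x y, g x ≤ g y + C * dist x y := by
    intro x y
    rw [← sub_le_iff_le_add]
    refine le_ciInf fun z => ?_
    have h1 : g x ≤ F x z := ciInf_le (hbdd x) z
    have h2 := mul_le_mul_of_nonneg_left (dist_triangle x y z) hC
    simp only [F] at h1 ⊢
    linarith
  have hglip : ∀ x y, |g x - g y| ≤ C * dist x y := by
    intro x y
    rw [abs_le]
    have h1 := hle x y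
    have h2 := hle y x
    rw [dist_comm y x] at h2
    constructor <;> linarith
  have hgc : Continuous g := by
    have : LipschitzWith ⟨C, hC⟩ g := LipschitzWith.of_dist_le_mul fun x y => by
      rw [Real.dist_eq]; exact hglip x y
    exact this.continuous
  refine ⟨g, hglip, fun x => ?_, fun ν => ?_⟩
  · have : g x ≤ F x x := ciInf_le (hbdd x) x
    simpa [F] using this
  · refine le_of_forall_pos_le_add fun ε hε => ?_
    let e := TopologicalSpace.denseSeq Ω
    have hex : ∀ x, ∃ n, F x (e n) < g x + ε := by
      intro x
      have h1 : ∃ y, F x y < g x + ε := exists_lt_of_ciInf_lt (by linarith : g x < g x + ε)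
      have hFc : Continuous (F x) := by
        simp only [F]; fun_prop
      obtain ⟨y, hy⟩ := (TopologicalSpace.denseRange_denseSeq Ω).exists_mem_open
        (isOpen_lt hFc continuous_const) h1
      exact ⟨y, hy⟩
    let T : Ω → Ω := fun x => e (Nat.find (hex x))
    have hT : Measurable T := by
      have : Measurable fun x => Nat.find (hex x) := by
        refine measurable_find hex fun k => ?_
        have hc1 : Continuous fun x => F x (e k) := by
          simp only [F]; fun_prop
        exact (isOpen_lt hc1 (hgc.add continuous_const)).measurableSet
      exact (measurable_from_nat (f := e)).comp this
    have hTs : ∀ x, h (T x) + C * dist x (T x) < g x + ε := fun x => Nat.find_spec (hex x)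
    have hi : Integrable (fun ω => h (T ω)) (ν : Measure Ω) :=
      Integrable.of_bound (hh.measurable.comp hT).aestronglyMeasurable M
        (Filter.Eventually.of_forall fun x => hM _)
    have hd : Integrable (fun ω => dist ω (T ω)) (ν : Measure Ω) :=
      Integrable.of_bound (measurable_id.dist hT).aestronglyMeasurable
        (Metric.diam (Set.univ : Set Ω))
        (Filter.Eventually.of_forall fun x => by
          rw [Real.norm_of_nonneg dist_nonneg]
          exact Metric.dist_le_diam_of_mem isCompact_univ.isBounded trivial trivial)
    have h1 := hlip ν (ν.map hT.aemeasurable)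
    have h2 := mul_le_mul_of_nonneg_left (krDist_map_le ν hT) hC
    have h3 := hVh (ν.map hT.aemeasurable)
    rw [map_integral hh ν hT] at h3
    have h4 : ∫ ω, (h (T ω) + C * dist ω (T ω)) ∂(ν : Measure Ω)
        ≤ ∫ ω, (g ω + ε) ∂(ν : Measure Ω) :=
      integral_mono (hi.add (hd.const_mul C))
        ((cont_integrable hgc _).add (integrable_const ε)) fun x => (hTs x).le
    rw [integral_add hi (hd.const_mul C), integral_const_mul,
      integral_add (cont_integrable hgc _) (integrable_const ε)] at h4
    simp only [integral_const, probReal_univ, one_smul] at h4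
    linarith

end Helpers

/-- **Proposition 3**: if `V` is Lipschitz continuous (with respect to the
Kantorovich–Rubinstein distance), then the concave closure `V̂` has bounded steepness at
`μ₀`. -/
theorem boundedSteepness_of_lipschitz
    {Ω : Type*} [MetricSpace Ω] [CompactSpace Ω] [MeasurableSpace Ω] [BorelSpace Ω]
    (μ₀ : ProbabilityMeasure Ω)
    (hfull : ∀ U : Set Ω, IsOpen U → U.Nonempty → 0 < (μ₀ : Measure Ω) U)
    (V : ProbabilityMeasure Ω → ℝ) (hV : UpperSemicontinuous V)
    (K : ℝ)
    (hlip : ∀ μ η : ProbabilityMeasure Ω,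
      |V μ - V η| ≤ K * krDist (μ : Measure Ω) (η : Measure Ω)) :
    ∃ L : ℝ, ∀ μ : ProbabilityMeasure Ω,
      concaveClosure V μ - concaveClosure V μ₀
        ≤ L * krDist (μ : Measure Ω) (μ₀ : Measure Ω) := by
  have hne : Nonempty Ω := μ₀.nonempty
  have hlip' : ∀ μ η : ProbabilityMeasure Ω,
      V μ - V η ≤ |K| * krDist (μ : Measure Ω) (η : Measure Ω) := fun μ η =>
    (le_abs_self _).trans ((hlip μ η).trans
      (mul_le_mul_of_nonneg_right (le_abs_self K) (krDist_nonneg' μ η)))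
  refine ⟨(|K| + 1) * (Metric.diam (Set.univ : Set Ω) + 1), fun μ => ?_⟩
  have hL : 0 ≤ (|K| + 1) * (Metric.diam (Set.univ : Set Ω) + 1) := by
    have : 0 ≤ Metric.diam (Set.univ : Set Ω) := Metric.diam_nonneg
    positivity
  by_cases hex : ∃ H : ProbabilityMeasure Ω → ℝ,
      Continuous H ∧ IsAffine H ∧ (∀ μ', V μ' ≤ H μ')
  · rw [sub_le_comm]
    obtain ⟨H₀, h1, h2, h3⟩ := hex
    refine le_csInf ⟨H₀ μ₀, H₀, h1, h2, h3, rfl⟩ ?_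
    rintro r ⟨H, hHc, hHa, hHV, rfl⟩
    have hh : Continuous (fun ω : Ω => H (diracProba ω)) := hHc.comp continuous_diracProba
    obtain ⟨g, hg1, hg2, hg3⟩ := exists_lip (abs_nonneg K) hlip' hh
      (fun ν => (hHV ν).trans (repr_all hHc hHa ν).le)
    have hgc : Continuous g := by
      have : LipschitzWith ⟨|K|, abs_nonneg K⟩ g := LipschitzWith.of_dist_le_mul fun x y => by
        rw [Real.dist_eq]; exact hg1 x y
      exact this.continuous
    have e1 : concaveClosure V μ ≤ ∫ ω, g ω ∂(μ : Measure Ω) := by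
      refine csInf_le ⟨V μ, ?_⟩ ⟨fun ν => ∫ ω, g ω ∂(ν : Measure Ω), continuous_integral hgc,
        fun μ η t ht => integral_mix hgc t ht μ η, hg3, rfl⟩
      rintro r ⟨H', -, -, hV', rfl⟩
      exact hV' μ
    have e2 := lip_le_krDist μ μ₀ (abs_nonneg K) hg1
    have e3 : ∫ ω, g ω ∂(μ₀ : Measure Ω) ≤ H μ₀ := by
      rw [repr_all hHc hHa μ₀]
      exact integral_mono (cont_integrable hgc _) (cont_integrable hh _) hg2
    linarith
  · have hz : ∀ ν, concaveClosure V ν = 0 := by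
      intro ν
      have : {r : ℝ | ∃ H : ProbabilityMeasure Ω → ℝ,
          Continuous H ∧ IsAffine H ∧ (∀ μ', V μ' ≤ H μ') ∧ r = H ν} = ∅ := by
        ext r
        simp only [Set.mem_setOf_eq, Set.mem_empty_iff_false, iff_false]
        rintro ⟨H, a, b, c, -⟩
        exact hex ⟨H, a, b, c⟩
      rw [concaveClosure, this, Real.sInf_empty]
    rw [hz, hz, sub_zero]
    exact mul_nonneg hL (krDist_nonneg' μ μ₀)
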